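/- Let X and Y be normed linear spaces, F : X ⇉ Y a set-valued mapping with convex graph, (x̄,ȳ) ∈ gph F, and g : Y → [0,∞) a convex function satisfying the standing assumptions. Then all five strict g-slopes of F at (x̄,ȳ) coincide: |∇F|_g^◇(x̄,ȳ) = |∇F|_g^+(x̄,ȳ) = |∇F|_g(x̄,ȳ) = |∂F|_g^+(x̄,ȳ) = |∂F|_g(x̄,ȳ). -/

import Mathlib

open Filter Metric Set Topology ENNReal

/-- The parametric metric `d_ρ((x,y),(u,v)) = max{‖x−u‖, ρ‖y−v‖}` on a product. -/
noncomputable def dRho {X Y : Type*} [NormedAddCommGroup X] [NormedAddCommGroup Y]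
    (ρ : ℝ) (p q : X × Y) : ℝ :=
  max (dist p.1 q.1) (ρ * dist p.2 q.2)

/-- The graph of a set-valued mapping `F : X ⇉ Y`. -/
def svGraph {X Y : Type*} (F : X → Set Y) : Set (X × Y) := {p : X × Y | p.2 ∈ F p.1}

/-- The (g,ρ)-slope `|∇F|_{g,ρ}(x,y)` of `F` at `p = (x,y) ∈ gph F`. -/
noncomputable def gSlopeRho {X Y : Type*} [NormedAddCommGroup X] [NormedAddCommGroup Y]
    (F : X → Set Y) (g : Y → ℝ) (ρ : ℝ) (p : X × Y) : ℝ≥0∞ :=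
  Filter.limsup
    (fun q => ENNReal.ofReal (max (g p.2 - g q.2) 0) / ENNReal.ofReal (dRho ρ q p))
    (𝓝[svGraph F \ {p}] p)

/-- The nonlocal (g,ρ)-slope `|∇F|_{g,ρ}^◇(x,y)` of `F` at `p = (x,y) ∈ gph F`. -/
noncomputable def nonlocalGSlopeRho {X Y : Type*} [NormedAddCommGroup X] [NormedAddCommGroup Y]
    (F : X → Set Y) (g : Y → ℝ) (ρ : ℝ) (p : X × Y) : ℝ≥0∞ :=
  ⨆ (q : X × Y) (_ : q ∈ svGraph F ∧ q ≠ p),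
    ENNReal.ofReal (max (g p.2 - g q.2) 0) / ENNReal.ofReal (dRho ρ q p)

/-- The strict g-slope `|∇F|_g(x̄,ȳ)`. -/
noncomputable def strictGSlope {X Y : Type*} [NormedAddCommGroup X] [NormedAddCommGroup Y]
    (F : X → Set Y) (g : Y → ℝ) (xbar : X) (ybar : Y) : ℝ≥0∞ :=
  ⨆ (ρ : ℝ) (_ : 0 < ρ),
    ⨅ (p : X × Y) (_ : p ∈ svGraph F ∧ ybar ∉ F p.1 ∧
        dist p.1 xbar < ρ ∧ dist p.2 ybar < ρ),
      gSlopeRho F g ρ p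

/-- The modified strict g-slope `|∇F|_g^+(x̄,ȳ)`. -/
noncomputable def modStrictGSlope {X Y : Type*} [NormedAddCommGroup X] [NormedAddCommGroup Y]
    (F : X → Set Y) (g : Y → ℝ) (xbar : X) (ybar : Y) : ℝ≥0∞ :=
  ⨆ (ρ : ℝ) (_ : 0 < ρ),
    ⨅ (p : X × Y) (_ : p ∈ svGraph F ∧ ybar ∉ F p.1 ∧
        dist p.1 xbar < ρ ∧ dist p.2 ybar < ρ),
      max (gSlopeRho F g ρ p)
        (ENNReal.ofReal (g p.2) / ENNReal.ofReal (dist p.1 xbar))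

/-- The uniform strict g-slope `|∇F|_g^◇(x̄,ȳ)`. -/
noncomputable def uniformStrictGSlope {X Y : Type*} [NormedAddCommGroup X] [NormedAddCommGroup Y]
    (F : X → Set Y) (g : Y → ℝ) (xbar : X) (ybar : Y) : ℝ≥0∞ :=
  ⨆ (ρ : ℝ) (_ : 0 < ρ),
    ⨅ (p : X × Y) (_ : p ∈ svGraph F ∧ ybar ∉ F p.1 ∧
        dist p.1 xbar < ρ ∧ dist p.2 ybar < ρ),
      nonlocalGSlopeRho F g ρ p

/-- The Fréchet normal cone to a subset `Ω` of a product of normed spaces, as a set of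
pairs of continuous linear functionals (ε-form of the limsup definition). -/
def prodNormalCone {X Y : Type*} [NormedAddCommGroup X] [NormedSpace ℝ X]
    [NormedAddCommGroup Y] [NormedSpace ℝ Y]
    (Ω : Set (X × Y)) (p : X × Y) : Set ((X →L[ℝ] ℝ) × (Y →L[ℝ] ℝ)) :=
  {s | p ∈ Ω ∧ ∀ ε : ℝ, 0 < ε → ∀ᶠ q : X × Y in 𝓝[Ω \ {p}] p,
    s.1 (q.1 - p.1) + s.2 (q.2 - p.2) ≤ ε * ‖q - p‖}

/-- The Fréchet subdifferential of a real-valued function (ε-form of the liminf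
definition). -/
def fSubdiff {Y : Type*} [NormedAddCommGroup Y] [NormedSpace ℝ Y]
    (g : Y → ℝ) (y : Y) : Set (Y →L[ℝ] ℝ) :=
  {ys | ∀ ε : ℝ, 0 < ε → ∀ᶠ v in 𝓝 y, g y + ys (v - y) - ε * ‖v - y‖ ≤ g v}

/-- The subdifferential (g,ρ)-slope
`|∂F|_{g,ρ}(x,y) = inf{‖x*‖ : x* ∈ D*F(x,y)(∂g(y)+ρB*)}`, where
`x* ∈ D*F(x,y)(y*) ⇔ (x*,−y*) ∈ N_{gph F}(x,y)`. -/
noncomputable def subdiffGSlopeRho {X Y : Type*} [NormedAddCommGroup X] [NormedSpace ℝ X]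
    [NormedAddCommGroup Y] [NormedSpace ℝ Y]
    (F : X → Set Y) (g : Y → ℝ) (ρ : ℝ) (p : X × Y) : ℝ≥0∞ :=
  ⨅ (xs : X →L[ℝ] ℝ) (_ : ∃ ys vs : Y →L[ℝ] ℝ, vs ∈ fSubdiff g p.2 ∧ ‖ys - vs‖ ≤ ρ ∧
      (xs, -ys) ∈ prodNormalCone (svGraph F) p),
    ENNReal.ofReal ‖xs‖

/-- The strict subdifferential g-slope `|∂F|_g(x̄,ȳ)`. -/
noncomputable def strictSubdiffGSlope {X Y : Type*} [NormedAddCommGroup X] [NormedSpace ℝ X]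
    [NormedAddCommGroup Y] [NormedSpace ℝ Y]
    (F : X → Set Y) (g : Y → ℝ) (xbar : X) (ybar : Y) : ℝ≥0∞ :=
  ⨆ (ρ : ℝ) (_ : 0 < ρ),
    ⨅ (p : X × Y) (_ : p ∈ svGraph F ∧ ybar ∉ F p.1 ∧
        dist p.1 xbar < ρ ∧ dist p.2 ybar < ρ),
      subdiffGSlopeRho F g ρ p

/-- The modified strict subdifferential g-slope `|∂F|_g^+(x̄,ȳ)`. -/
noncomputable def modStrictSubdiffGSlope {X Y : Type*} [NormedAddCommGroup X] [NormedSpace ℝ X]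
    [NormedAddCommGroup Y] [NormedSpace ℝ Y]
    (F : X → Set Y) (g : Y → ℝ) (xbar : X) (ybar : Y) : ℝ≥0∞ :=
  ⨆ (ρ : ℝ) (_ : 0 < ρ),
    ⨅ (p : X × Y) (_ : p ∈ svGraph F ∧ ybar ∉ F p.1 ∧
        dist p.1 xbar < ρ ∧ dist p.2 ybar < ρ),
      max (subdiffGSlopeRho F g ρ p)
        (ENNReal.ofReal (g p.2) / ENNReal.ofReal (dist p.1 xbar))

/-!
A convex function that is minimal at a point up to first order is minimal there, so for convex data
the Fréchet subgradient and normal inequalities hold globally, and moving along segments shows that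
the local slopes equal the nonlocal ones. The bound `|∇F|_{g,ρ}^◇(p) ≤ σ` says exactly that `p`
minimizes `q ↦ g q.2 + σ * d_ρ(q, p)` over the convex graph; the Hahn–Banach sandwich theorem splits
the optimality condition into a subgradient of `g`, a normal to the graph and a remainder of dual
norm at most `σ`, which yields `|∂F|_{g,σρ}(p) ≤ σ`. Finally, testing the nonlocal slope at
`(x̄, ȳ)` bounds `g(y) / ‖x - x̄‖`: by (P2') the term `ρ * ‖y - ȳ‖` of `d_ρ` is negligible as
`ρ ↓ 0`.
-/

section ConvexAnalysis

lemma tendsto_lineMap_nhdsWithin_diff_singleton {E : Type*} [NormedAddCommGroup E]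
    [NormedSpace ℝ E] {s : Set E} (hs : Convex ℝ s) {p q : E} (hp : p ∈ s) (hq : q ∈ s)
    (hne : q ≠ p) :
    Tendsto (AffineMap.lineMap p q : ℝ → E) (𝓝[>] 0) (𝓝[s \ {p}] p) := by
  refine tendsto_nhdsWithin_of_tendsto_nhds_of_eventually_within _ ?_ ?_
  · exact (AffineMap.lineMap_continuous.tendsto' _ _ (AffineMap.lineMap_apply_zero p q)).mono_left
      nhdsWithin_le_nhds
  · filter_upwards [Ioo_mem_nhdsGT (zero_lt_one' ℝ)] with t ht
    exact ⟨hs.lineMap_mem hp hq ⟨ht.1.le, ht.2.le⟩, by simp [ht.1.ne', hne.symm]⟩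

lemma map_lineMap_le_of_convexOn {E : Type*} [AddCommGroup E] [Module ℝ E] {s : Set E} {f : E → ℝ}
    (hf : ConvexOn ℝ s f) {p q : E} (hp : p ∈ s) (hq : q ∈ s) {t : ℝ} (ht : t ∈ Icc (0 : ℝ) 1) :
    f (AffineMap.lineMap p q t) ≤ f p + t * (f q - f p) := by
  have h := hf.2 hp hq (sub_nonneg.2 ht.2) ht.1 (sub_add_cancel 1 t)
  rw [← AffineMap.lineMap_apply_module] at h
  simp only [smul_eq_mul] at h
  linarith

lemma isMinOn_of_convexOn_of_eventually {E : Type*} [NormedAddCommGroup E] [NormedSpace ℝ E]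
    {s : Set E} {f : E → ℝ} (hf : ConvexOn ℝ s f) {p : E} (hp : p ∈ s)
    (h : ∀ ε : ℝ, 0 < ε → ∀ᶠ q in 𝓝[s \ {p}] p, f p - ε * ‖q - p‖ ≤ f q) :
    IsMinOn f s p := by
  refine isMinOn_iff.2 fun q hq => ?_
  rcases eq_or_ne q p with rfl | hne
  · exact le_rfl
  have hnorm : 0 < ‖q - p‖ := norm_pos_iff.2 (sub_ne_zero.2 hne)
  refine _root_.le_of_forall_pos_le_add fun ε hε => ?_
  obtain ⟨t, hdecr, ht⟩ :=
    (((tendsto_lineMap_nhdsWithin_diff_singleton hf.1 hp hq hne).eventually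
      (h (ε / ‖q - p‖) (by positivity))).and (Ioo_mem_nhdsGT (zero_lt_one' ℝ))).exists
  have hconv := map_lineMap_le_of_convexOn hf hp hq ⟨ht.1.le, ht.2.le⟩
  have hdist : ε / ‖q - p‖ * ‖AffineMap.lineMap p q t - p‖ = t * ε := by
    rw [← dist_eq_norm (AffineMap.lineMap p q t), dist_lineMap_left, dist_comm, dist_eq_norm,
      Real.norm_of_nonneg ht.1.le]
    field_simp
  refine le_of_mul_le_mul_left ?_ ht.1
  linarith

lemma exists_affine_between_of_concaveOn_of_convexOn {E : Type*} [TopologicalSpace E]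
    [AddCommGroup E] [Module ℝ E] [IsTopologicalAddGroup E] [ContinuousSMul ℝ E] {C : Set E}
    {φ ψ : E → ℝ} (hφ : ConvexOn ℝ univ φ) (hφc : Continuous φ) (hψ : ConcaveOn ℝ C ψ)
    (hC : C.Nonempty) (hle : ∀ q ∈ C, ψ q ≤ φ q) :
    ∃ (l : E →L[ℝ] ℝ) (a : ℝ), (∀ q, l q + a ≤ φ q) ∧ ∀ q ∈ C, ψ q ≤ l q + a := by
  have hepi : Convex ℝ {z : E × ℝ | φ z.1 < z.2} := by simpa using hφ.convex_strict_epigraph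
  have hepi_open : IsOpen {z : E × ℝ | φ z.1 < z.2} :=
    isOpen_lt (hφc.comp continuous_fst) continuous_snd
  have hdisj : Disjoint {z : E × ℝ | φ z.1 < z.2} {z : E × ℝ | z.1 ∈ C ∧ z.2 ≤ ψ z.1} :=
    Set.disjoint_left.2 fun z hz hz' => (hz'.2.trans (hle _ hz'.1)).not_gt hz
  obtain ⟨f, u, hf_epi, hf_hypo⟩ :=
    geometric_hahn_banach_open hepi hepi_open hψ.convex_hypograph hdisj
  have hf_apply (q : E) (t : ℝ) : f (q, t) = f (q, 0) + t * f (0, 1) := by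
    rw [← smul_eq_mul, ← map_smul, ← map_add]
    simp
  have hslope : f (0, 1) < 0 := by
    obtain ⟨p, hp⟩ := hC
    have habove := hf_epi (p, φ p + 1) (lt_add_one (φ p))
    have hbelow := hf_hypo (p, ψ p) ⟨hp, le_rfl⟩
    rw [hf_apply] at habove hbelow
    nlinarith [hle p hp]
  have hdivide (q : E) : (-f (0, 1))⁻¹ * f (q, 0) + u / f (0, 1) = (u - f (q, 0)) / f (0, 1) := by
    field_simp [hslope.ne]
    ring
  refine ⟨(-f (0, 1))⁻¹ • f.comp (ContinuousLinearMap.inl ℝ E ℝ), u / f (0, 1),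
    fun q => le_of_forall_gt_imp_ge_of_dense fun t ht => ?_, fun q hq => ?_⟩
  · have h := hf_epi (q, t) ht
    rw [hf_apply] at h
    change (-f (0, 1))⁻¹ * f (q, 0) + u / f (0, 1) ≤ t
    rw [hdivide, div_le_iff_of_neg hslope]
    linarith
  · have h := hf_hypo (q, ψ q) ⟨hq, le_rfl⟩
    rw [hf_apply] at h
    change ψ q ≤ (-f (0, 1))⁻¹ * f (q, 0) + u / f (0, 1)
    rw [hdivide, le_div_iff_of_neg hslope]
    linarith

lemma exists_subgradient_of_isMinOn_add {E : Type*} [TopologicalSpace E]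
    [AddCommGroup E] [Module ℝ E] [IsTopologicalAddGroup E] [ContinuousSMul ℝ E] {C : Set E}
    {φ ψ : E → ℝ} (hφ : ConvexOn ℝ univ φ) (hφc : Continuous φ) (hψ : ConvexOn ℝ C ψ) {p : E}
    (hp : p ∈ C) (hmin : IsMinOn (fun q => φ q + ψ q) C p) :
    ∃ l : E →L[ℝ] ℝ, (∀ q, φ p + l (q - p) ≤ φ q) ∧ ∀ q ∈ C, ψ p - l (q - p) ≤ ψ q := by
  obtain ⟨l, a, hlφ, hlψ⟩ := exists_affine_between_of_concaveOn_of_convexOn hφ hφc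
    ((concaveOn_const (φ p + ψ p) hψ.1).sub hψ) ⟨p, hp⟩
    (fun q hq => by simpa [sub_le_iff_le_add] using isMinOn_iff.1 hmin q hq)
  simp only [Pi.sub_apply] at hlψ
  have hcontact : l p + a = φ p := le_antisymm (hlφ p) (by linarith [hlψ p hp])
  refine ⟨l, fun q => ?_, fun q hq => ?_⟩ <;> rw [map_sub]
  · linarith [hlφ q]
  · linarith [hlψ q hq]

lemma norm_le_of_forall_apply_le {E : Type*} [SeminormedAddCommGroup E] [NormedSpace ℝ E]
    {l : E →L[ℝ] ℝ} {σ : ℝ} (hσ : 0 ≤ σ) (h : ∀ w, l w ≤ σ * ‖w‖) : ‖l‖ ≤ σ := by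
  refine l.opNorm_le_bound hσ fun w => abs_le'.2 ⟨h w, ?_⟩
  simpa using h (-w)

lemma continuous_of_convexOn_of_continuousAt {E : Type*} [NormedAddCommGroup E] [NormedSpace ℝ E]
    {f : E → ℝ} (hf : ConvexOn ℝ univ f) {x : E} (hx : ContinuousAt f x) : Continuous f := by
  have hiff : ContinuousOn f univ ↔ ∃ x₀ ∈ univ, ContinuousAt f x₀ :=
    (hf.continuousOn_tfae isOpen_univ univ_nonempty).out 1 2
  exact continuousOn_univ.1 (hiff.2 ⟨x, mem_univ x, hx⟩)

end ConvexAnalysis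

section LowerLimit

lemma iSup_iInf_le_iSup_iInf_of_eventually {α : Type*} {N : ℝ → Set α} (hN : Monotone N)
    {s t : ℝ → α → ℝ≥0∞}
    (h : ∀ a b : NNReal, a < b → ∀ ρ : ℝ, 0 < ρ →
      ∀ᶠ ρ' in 𝓝[>] (0 : ℝ), ∀ p ∈ N ρ', t ρ' p < a → s ρ p ≤ b) :
    (⨆ (ρ : ℝ) (_ : 0 < ρ), ⨅ p ∈ N ρ, s ρ p) ≤ ⨆ (ρ : ℝ) (_ : 0 < ρ), ⨅ p ∈ N ρ, t ρ p := by
  by_contra! hlt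
  obtain ⟨a, hta, hlt⟩ := ENNReal.lt_iff_exists_nnreal_btwn.1 hlt
  obtain ⟨b, hab, hbs⟩ := ENNReal.lt_iff_exists_nnreal_btwn.1 hlt
  simp only [lt_iSup_iff] at hbs
  obtain ⟨ρ, hρ, hbρ⟩ := hbs
  obtain ⟨ρ', hs_le, hρ', hle⟩ :=
    ((h a b (ENNReal.coe_lt_coe.1 hab) ρ hρ).and (Ioc_mem_nhdsGT hρ)).exists
  have hinf : ⨅ p ∈ N ρ', t ρ' p < a := (le_iSup₂_of_le ρ' hρ' le_rfl).trans_lt hta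
  simp only [iInf_lt_iff] at hinf
  obtain ⟨p, hp, hpa⟩ := hinf
  exact (iInf₂_le_of_le p (hN hle hp) (hs_le p hp hpa)).not_gt hbρ

lemma eventually_mul_lt_nhdsGT_zero (a : ℝ) {c : ℝ} (hc : 0 < c) :
    ∀ᶠ ρ in 𝓝[>] (0 : ℝ), a * ρ < c :=
  nhdsWithin_le_nhds ((continuous_const_mul a).tendsto' 0 0 (mul_zero a) |>.eventually_lt_const hc)

end LowerLimit

section Slopes

variable {X Y : Type*} [NormedAddCommGroup X] [NormedAddCommGroup Y]
  {F : X → Set Y} {g : Y → ℝ} {ρ ρ' : ℝ} {p q : X × Y}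

lemma dRho_self (ρ : ℝ) (p : X × Y) : dRho ρ p p = 0 := by
  simp [dRho]

lemma dRho_pos (hρ : 0 < ρ) (hne : q ≠ p) : 0 < dRho ρ q p := by
  by_cases hfst : q.1 = p.1
  · exact lt_max_of_lt_right (mul_pos hρ (dist_pos.2 fun hsnd => hne (Prod.ext hfst hsnd)))
  · exact lt_max_of_lt_left (dist_pos.2 hfst)

lemma continuous_dRho (ρ : ℝ) (p : X × Y) : Continuous fun q => dRho ρ q p := by
  unfold dRho
  fun_prop

lemma nonlocalGSlopeRho_le_coe_iff (hρ : 0 < ρ) {σ : NNReal} :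
    nonlocalGSlopeRho F g ρ p ≤ σ ↔ ∀ q ∈ svGraph F, g p.2 - g q.2 ≤ σ * dRho ρ q p := by
  have hquotient (q : X × Y) (hne : q ≠ p) :
      ENNReal.ofReal (max (g p.2 - g q.2) 0) / ENNReal.ofReal (dRho ρ q p) ≤ σ ↔
        g p.2 - g q.2 ≤ σ * dRho ρ q p := by
    have hd := dRho_pos hρ hne
    rw [← ENNReal.ofReal_div_of_pos hd, ← ENNReal.ofReal_coe_nnreal,
      ENNReal.ofReal_le_ofReal_iff σ.coe_nonneg, div_le_iff₀ hd, max_le_iff,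
      and_iff_left (by positivity)]
  refine iSup₂_le_iff.trans ⟨fun h q hq => ?_, fun h q hq => (hquotient q hq.2).2 (h q hq.1)⟩
  rcases eq_or_ne q p with rfl | hne
  · simp [dRho_self]
  · exact (hquotient q hne).1 (h q ⟨hq, hne⟩)

lemma nonlocalGSlopeRho_antitone : Antitone fun ρ => nonlocalGSlopeRho F g ρ p := by
  intro ρ' ρ hle
  dsimp only [nonlocalGSlopeRho, dRho]
  gcongr

lemma gSlopeRho_le_nonlocalGSlopeRho : gSlopeRho F g ρ p ≤ nonlocalGSlopeRho F g ρ p := by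
  refine Filter.limsup_le_of_le (by isBoundedDefault) ?_
  filter_upwards [self_mem_nhdsWithin] with q hq
  exact le_iSup₂_of_le q ⟨hq.1, hq.2⟩ le_rfl

lemma sub_le_mul_dist_fst_of_nonlocalGSlopeRho_le (hρ : 0 < ρ) {σ : NNReal} {c : ℝ}
    (hslope : nonlocalGSlopeRho F g ρ p ≤ σ) (hq : q ∈ svGraph F) (hσ : σ * ρ < c)
    (hc : c * dist q.2 p.2 ≤ g p.2 - g q.2) :
    g p.2 - g q.2 ≤ σ * dist q.1 p.1 := by
  have hle := (nonlocalGSlopeRho_le_coe_iff hρ).1 hslope q hq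
  rcases le_total (ρ * dist q.2 p.2) (dist q.1 p.1) with hfst | hsnd
  · rwa [dRho, max_eq_left hfst] at hle
  · rw [dRho, max_eq_right hsnd] at hle
    have hzero : dist q.2 p.2 = 0 := by nlinarith [dist_nonneg (x := q.2) (y := p.2)]
    rw [hzero] at hle
    have : 0 ≤ σ * dist q.1 p.1 := by positivity
    linarith

variable [NormedSpace ℝ X] [NormedSpace ℝ Y]

lemma dRho_lineMap_left {t : ℝ} (ht : 0 ≤ t) :
    dRho ρ (AffineMap.lineMap p q t) p = t * dRho ρ q p := by
  simp only [dRho, AffineMap.fst_lineMap, AffineMap.snd_lineMap, dist_lineMap_left,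
    Real.norm_of_nonneg ht, mul_max_of_nonneg _ _ ht, dist_comm p.1, dist_comm p.2,
    mul_left_comm ρ]

lemma convexOn_dRho (hρ : 0 ≤ ρ) (p : X × Y) : ConvexOn ℝ univ fun q => dRho ρ q p :=
  ((convexOn_univ_dist p.1).comp_linearMap (LinearMap.fst ℝ X Y)).sup
    (((convexOn_univ_dist p.2).comp_linearMap (LinearMap.snd ℝ X Y)).smul hρ)

lemma gSlopeRho_eq_nonlocalGSlopeRho (hρ : 0 < ρ) (hF : Convex ℝ (svGraph F))
    (hg : ConvexOn ℝ univ g) (hp : p ∈ svGraph F) :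
    gSlopeRho F g ρ p = nonlocalGSlopeRho F g ρ p := by
  refine le_antisymm gSlopeRho_le_nonlocalGSlopeRho (iSup₂_le fun q ⟨hq, hne⟩ => ?_)
  refine Filter.le_limsup_of_frequently_le ?_ (by isBoundedDefault)
  refine (tendsto_lineMap_nhdsWithin_diff_singleton hF hp hq hne).frequently
    (Eventually.frequently ?_)
  filter_upwards [Ioo_mem_nhdsGT (zero_lt_one' ℝ)] with t ⟨ht0, ht1⟩
  have hd := dRho_pos hρ hne
  have hdescent : t * (g p.2 - g q.2) ≤ g p.2 - g (AffineMap.lineMap p q t).2 := by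
    rw [AffineMap.snd_lineMap]
    linarith [map_lineMap_le_of_convexOn hg (mem_univ p.2) (mem_univ q.2) ⟨ht0.le, ht1.le⟩]
  rw [dRho_lineMap_left ht0.le, ← ENNReal.ofReal_div_of_pos hd,
    ← ENNReal.ofReal_div_of_pos (mul_pos ht0 hd)]
  refine ENNReal.ofReal_le_ofReal ?_
  calc max (g p.2 - g q.2) 0 / dRho ρ q p
      = max (t * (g p.2 - g q.2)) 0 / (t * dRho ρ q p) := by
        rw [← mul_div_mul_left _ _ ht0.ne', mul_max_of_nonneg _ _ ht0.le, mul_zero]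
    _ ≤ max (g p.2 - g (AffineMap.lineMap p q t).2) 0 / (t * dRho ρ q p) := by gcongr

lemma mem_prodNormalCone_iff_of_convex {Ω : Set (X × Y)} (hΩ : Convex ℝ Ω) (hp : p ∈ Ω)
    {n : (X →L[ℝ] ℝ) × (Y →L[ℝ] ℝ)} :
    n ∈ prodNormalCone Ω p ↔ ∀ q ∈ Ω, n.1 (q.1 - p.1) + n.2 (q.2 - p.2) ≤ 0 := by
  refine ⟨fun hn q hq => ?_, fun h => ⟨hp, fun ε hε => ?_⟩⟩
  · have hconv : ConvexOn ℝ Ω fun q => -n.1.coprod n.2 q :=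
      ((n.1.coprod n.2).toLinearMap.concaveOn hΩ).neg
    have hmin : IsMinOn (fun q => -n.1.coprod n.2 q) Ω p := by
      refine isMinOn_of_convexOn_of_eventually hconv hp fun ε hε => ?_
      filter_upwards [hn.2 ε hε] with q hq
      simp only [map_sub, ContinuousLinearMap.coprod_apply] at hq ⊢
      linarith
    have hle := isMinOn_iff.1 hmin q hq
    simp only [map_sub, ContinuousLinearMap.coprod_apply] at hle ⊢
    linarith
  · filter_upwards [self_mem_nhdsWithin] with q hq
    exact (h q hq.1).trans (by positivity)

lemma mem_fSubdiff_iff_of_convexOn (hg : ConvexOn ℝ univ g) {y : Y} {ys : Y →L[ℝ] ℝ} :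
    ys ∈ fSubdiff g y ↔ ∀ v, g y + ys (v - y) ≤ g v := by
  refine ⟨fun hys v => ?_, fun h ε hε => Eventually.of_forall fun v => ?_⟩
  · have hconv : ConvexOn ℝ univ fun v => g v - ys v :=
      hg.sub (ys.toLinearMap.concaveOn convex_univ)
    have hmin : IsMinOn (fun v => g v - ys v) univ y := by
      refine isMinOn_of_convexOn_of_eventually hconv (mem_univ y) fun ε hε => ?_
      filter_upwards [nhdsWithin_le_nhds (hys ε hε)] with v hv
      rw [map_sub] at hv
      linarith
    have hle := isMinOn_iff.1 hmin v (mem_univ v)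
    rw [map_sub]
    linarith
  · have : 0 ≤ ε * ‖v - y‖ := by positivity
    linarith [h v]

lemma nonlocalGSlopeRho_le_subdiffGSlopeRho_add (hρ : 0 < ρ)
    (hF : Convex ℝ (svGraph F)) (hg : ConvexOn ℝ univ g) :
    nonlocalGSlopeRho F g ρ p ≤ subdiffGSlopeRho F g ρ' p + ENNReal.ofReal (ρ' / ρ) := by
  simp only [subdiffGSlopeRho, ENNReal.iInf_add]
  refine le_iInf₂ fun xs ⟨ys, vs, hvs, hdist, hnormal⟩ => ?_
  have hρ' : 0 ≤ ρ' := (norm_nonneg _).trans hdist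
  rw [← ENNReal.ofReal_add (norm_nonneg xs) (by positivity)]
  refine (nonlocalGSlopeRho_le_coe_iff hρ).2 fun q hq => ?_
  rw [Real.coe_toNNReal _ (by positivity)]
  have hsubgradient := (mem_fSubdiff_iff_of_convexOn hg).1 hvs q.2
  have hnormal_le := (mem_prodNormalCone_iff_of_convex hF hnormal.1).1 hnormal q hq
  have hxs : -xs (q.1 - p.1) ≤ ‖xs‖ * dist q.1 p.1 :=
    dist_eq_norm q.1 p.1 ▸ (neg_le_abs _).trans (xs.le_opNorm _)
  have hys : ys (q.2 - p.2) - vs (q.2 - p.2) ≤ ρ' * dist q.2 p.2 :=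
    dist_eq_norm q.2 p.2 ▸ (le_abs_self _).trans ((ys - vs).le_of_opNorm_le hdist _)
  simp only [_root_.neg_apply] at hnormal_le
  calc g p.2 - g q.2 ≤ ‖xs‖ * dist q.1 p.1 + ρ' / ρ * (ρ * dist q.2 p.2) := by
        rw [← mul_assoc, div_mul_cancel₀ _ hρ.ne']
        linarith
    _ ≤ ‖xs‖ * dRho ρ q p + ρ' / ρ * dRho ρ q p := by
        gcongr
        exacts [le_max_left _ _, le_max_right _ _]
    _ = (‖xs‖ + ρ' / ρ) * dRho ρ q p := by ring

lemma comp_inl_eq_zero_of_forall_apply_sub_le {l : X × Y →L[ℝ] ℝ}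
    (h : ∀ q, g p.2 + l (q - p) ≤ g q.2) : l.comp (ContinuousLinearMap.inl ℝ X Y) = 0 := by
  refine norm_le_zero_iff.1 (norm_le_of_forall_apply_le le_rfl fun w => ?_)
  have hw := h (p + (w, 0))
  rw [add_sub_cancel_left] at hw
  simpa using hw

lemma norm_comp_inl_le_of_forall_apply_sub_le {σ : ℝ} (hσ : 0 ≤ σ) {l : X × Y →L[ℝ] ℝ}
    (h : ∀ q, l (q - p) ≤ σ * dRho ρ q p) : ‖l.comp (ContinuousLinearMap.inl ℝ X Y)‖ ≤ σ :=
  norm_le_of_forall_apply_le hσ fun w => by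
    have hw := h (p + (w, 0))
    rw [add_sub_cancel_left] at hw
    simpa [dRho] using hw

lemma norm_comp_inr_le_of_forall_apply_sub_le {σ : ℝ} (hσ : 0 ≤ σ) (hρ : 0 ≤ ρ)
    {l : X × Y →L[ℝ] ℝ} (h : ∀ q, l (q - p) ≤ σ * dRho ρ q p) :
    ‖l.comp (ContinuousLinearMap.inr ℝ X Y)‖ ≤ σ * ρ :=
  norm_le_of_forall_apply_le (mul_nonneg hσ hρ) fun w => by
    have hw := h (p + (0, w))
    rw [add_sub_cancel_left] at hw
    simpa [dRho, mul_nonneg hρ, mul_assoc] using hw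

lemma exists_coderivative_of_isMinOn {σ : ℝ} (hσ : 0 ≤ σ) (hρ : 0 ≤ ρ) {Ω : Set (X × Y)}
    (hΩ : Convex ℝ Ω) (hg : ConvexOn ℝ univ g) (hgc : Continuous g) (hp : p ∈ Ω)
    (hmin : IsMinOn (fun q => g q.2 + σ * dRho ρ q p) Ω p) :
    ∃ (xs : X →L[ℝ] ℝ) (ys vs : Y →L[ℝ] ℝ), ‖xs‖ ≤ σ ∧ vs ∈ fSubdiff g p.2 ∧
      ‖ys - vs‖ ≤ σ * ρ ∧ (xs, -ys) ∈ prodNormalCone Ω p := by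
  have hd : ConvexOn ℝ univ fun q => σ * dRho ρ q p := (convexOn_dRho hρ p).smul hσ
  obtain ⟨l, hlg, hld⟩ := exists_subgradient_of_isMinOn_add
    (hg.comp_linearMap (LinearMap.snd ℝ X Y)) (hgc.comp continuous_snd)
    (hd.subset (subset_univ Ω) hΩ) hp hmin
  obtain ⟨m, hmd, hml⟩ := exists_subgradient_of_isMinOn_add hd
    ((continuous_dRho ρ p).const_mul σ) (l.toLinearMap.convexOn hΩ) hp
    (isMinOn_iff.2 fun q hq => by simpa [dRho_self] using hld q hq)
  simp only [dRho_self, mul_zero, zero_add] at hmd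
  have hl_inl := comp_inl_eq_zero_of_forall_apply_sub_le hlg
  have hl_apply (w : X × Y) : l w = l.comp (ContinuousLinearMap.inr ℝ X Y) w.2 := by
    rw [← l.comp_inl_add_comp_inr w, hl_inl, _root_.zero_apply, zero_add]
  refine ⟨-m.comp (ContinuousLinearMap.inl ℝ X Y), l.comp (ContinuousLinearMap.inr ℝ X Y) +
    m.comp (ContinuousLinearMap.inr ℝ X Y), l.comp (ContinuousLinearMap.inr ℝ X Y), ?_, ?_, ?_, ?_⟩
  · exact (norm_neg _).trans_le (norm_comp_inl_le_of_forall_apply_sub_le hσ hmd)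
  · refine (mem_fSubdiff_iff_of_convexOn hg).2 fun v => ?_
    have hv := hlg (p.1, v)
    rw [hl_apply] at hv
    exact hv
  · simpa using norm_comp_inr_le_of_forall_apply_sub_le hσ hρ hmd
  · refine (mem_prodNormalCone_iff_of_convex hΩ hp).2 fun q hq => ?_
    have hm_le := hml q hq
    have hl_eq := hl_apply (q - p)
    rw [← m.comp_inl_add_comp_inr (q - p)] at hm_le
    rw [map_sub] at hl_eq
    simp only [ContinuousLinearMap.coe_coe, _root_.neg_apply, _root_.add_apply, Prod.fst_sub,
      Prod.snd_sub] at hm_le hl_eq ⊢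
    linarith

lemma subdiffGSlopeRho_le_of_nonlocalGSlopeRho_le (hρ : 0 < ρ) {σ : NNReal}
    (hF : Convex ℝ (svGraph F)) (hg : ConvexOn ℝ univ g) (hgc : Continuous g)
    (hp : p ∈ svGraph F) (hslope : nonlocalGSlopeRho F g ρ p ≤ σ) (hρ' : σ * ρ ≤ ρ') :
    subdiffGSlopeRho F g ρ' p ≤ σ := by
  have hmin : IsMinOn (fun q => g q.2 + σ * dRho ρ q p) (svGraph F) p :=
    isMinOn_iff.2 fun q hq => by
      simpa [dRho_self, sub_le_iff_le_add, add_comm] using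
        (nonlocalGSlopeRho_le_coe_iff hρ).1 hslope q hq
  obtain ⟨xs, ys, vs, hxs, hvs, hdist, hnormal⟩ :=
    exists_coderivative_of_isMinOn σ.2 hρ.le hF hg hgc hp hmin
  exact iInf₂_le_of_le xs ⟨ys, vs, hvs, hdist.trans hρ', hnormal⟩
    (ENNReal.ofReal_le_of_le_toReal hxs)

end Slopes

section StrictSlopes

/-- The graph points `(x, y)` with `x ∉ F⁻¹(ȳ)` that are `ρ`-close to `(x̄, ȳ)`: the set over which
all five strict slopes take their infima. -/
def strictNhd {X Y : Type*} [PseudoMetricSpace X] [PseudoMetricSpace Y] (F : X → Set Y) (xbar : X)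
    (ybar : Y) (ρ : ℝ) : Set (X × Y) :=
  {p | p ∈ svGraph F ∧ ybar ∉ F p.1 ∧ dist p.1 xbar < ρ ∧ dist p.2 ybar < ρ}

lemma monotone_strictNhd {X Y : Type*} [PseudoMetricSpace X] [PseudoMetricSpace Y] (F : X → Set Y)
    (xbar : X) (ybar : Y) : Monotone (strictNhd F xbar ybar) :=
  fun _ _ hle _ hp => ⟨hp.1, hp.2.1, hp.2.2.1.trans_le hle, hp.2.2.2.trans_le hle⟩

variable {X Y : Type*} [NormedAddCommGroup X] [NormedSpace ℝ X] [NormedAddCommGroup Y]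
  [NormedSpace ℝ Y] {F : X → Set Y} {g : Y → ℝ} {xbar : X} {ybar : Y}

lemma strictSubdiffGSlope_le_modStrictSubdiffGSlope :
    strictSubdiffGSlope F g xbar ybar ≤ modStrictSubdiffGSlope F g xbar ybar :=
  iSup₂_mono fun _ _ => iInf₂_mono fun _ _ => le_max_left _ _

lemma uniformStrictGSlope_eq_strictGSlope (hF : Convex ℝ (svGraph F)) (hg : ConvexOn ℝ univ g) :
    uniformStrictGSlope F g xbar ybar = strictGSlope F g xbar ybar :=
  biSup_congr fun _ hρ => biInf_congr fun _ hp =>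
    (gSlopeRho_eq_nonlocalGSlopeRho hρ hF hg hp.1).symm

lemma uniformStrictGSlope_le_strictSubdiffGSlope (hF : Convex ℝ (svGraph F))
    (hg : ConvexOn ℝ univ g) :
    uniformStrictGSlope F g xbar ybar ≤ strictSubdiffGSlope F g xbar ybar := by
  refine iSup_iInf_le_iSup_iInf_of_eventually (monotone_strictNhd F xbar ybar)
    fun a b hab ρ hρ => ?_
  have hgap : 0 < ρ * ((b : ℝ) - a) := mul_pos hρ (sub_pos.2 hab)
  filter_upwards [Ioc_mem_nhdsGT hgap] with ρ' ⟨_, hle⟩ p _ hlt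
  calc nonlocalGSlopeRho F g ρ p
      ≤ subdiffGSlopeRho F g ρ' p + ENNReal.ofReal (ρ' / ρ) :=
        nonlocalGSlopeRho_le_subdiffGSlopeRho_add hρ hF hg
    _ ≤ ENNReal.ofReal a + ENNReal.ofReal (b - a) := by
        gcongr
        · rw [ENNReal.ofReal_coe_nnreal]
          exact hlt.le
        · exact (div_le_iff₀' hρ).2 hle
    _ = b := by
        rw [← ENNReal.ofReal_add a.coe_nonneg (sub_nonneg.2 (NNReal.coe_le_coe.2 hab.le)),
          add_sub_cancel, ENNReal.ofReal_coe_nnreal]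

lemma modStrictSubdiffGSlope_le_modStrictGSlope (hF : Convex ℝ (svGraph F))
    (hg : ConvexOn ℝ univ g) (hgc : Continuous g) :
    modStrictSubdiffGSlope F g xbar ybar ≤ modStrictGSlope F g xbar ybar := by
  refine iSup_iInf_le_iSup_iInf_of_eventually (monotone_strictNhd F xbar ybar)
    fun a b hab ρ hρ => ?_
  filter_upwards [self_mem_nhdsWithin, eventually_mul_lt_nhdsGT_zero a hρ] with ρ' hρ' haρ' p hp hlt
  obtain ⟨hslope, hratio⟩ := max_lt_iff.1 hlt
  rw [gSlopeRho_eq_nonlocalGSlopeRho hρ' hF hg hp.1] at hslope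
  refine (max_le ?_ hratio.le).trans (ENNReal.coe_le_coe.2 hab.le)
  exact subdiffGSlopeRho_le_of_nonlocalGSlopeRho_le hρ' hF hg hgc hp.1 hslope.le haρ'.le

lemma modStrictGSlope_le_strictGSlope (hgraph : ybar ∈ F xbar) (hg0 : g ybar = 0)
    (hgrowth : ∃ c : ℝ, 0 < c ∧ ∀ᶠ y in 𝓝 ybar, 0 < g y → c * dist y ybar ≤ g y)
    (hF : Convex ℝ (svGraph F)) (hg : ConvexOn ℝ univ g) :
    modStrictGSlope F g xbar ybar ≤ strictGSlope F g xbar ybar := by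
  obtain ⟨c, hc, hgrowth⟩ := hgrowth
  obtain ⟨δ, hδ, hball⟩ := Metric.eventually_nhds_iff.1 hgrowth
  refine iSup_iInf_le_iSup_iInf_of_eventually (monotone_strictNhd F xbar ybar)
    fun a b hab ρ hρ => ?_
  filter_upwards [Ioc_mem_nhdsGT (lt_min hρ hδ), eventually_mul_lt_nhdsGT_zero a hc]
    with ρ' ⟨hρ', hle⟩ haρ' p hp hlt
  rw [gSlopeRho_eq_nonlocalGSlopeRho hρ' hF hg hp.1] at hlt
  rw [gSlopeRho_eq_nonlocalGSlopeRho hρ hF hg hp.1]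
  refine (max_le ?_ ?_).trans (ENNReal.coe_le_coe.2 hab.le)
  · exact (nonlocalGSlopeRho_antitone (hle.trans (min_le_left ρ δ))).trans hlt.le
  rcases le_or_gt (g p.2) 0 with hnonpos | hpos
  · simp [ENNReal.ofReal_of_nonpos hnonpos]
  have hgrowth_p := hball (hp.2.2.2.trans_le (hle.trans (min_le_right ρ δ))) hpos
  have hg_le : g p.2 - g ybar ≤ a * dist xbar p.1 :=
    sub_le_mul_dist_fst_of_nonlocalGSlopeRho_le hρ' hlt.le (q := (xbar, ybar)) hgraph haρ'
      (by simpa [hg0, dist_comm] using hgrowth_p)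
  refine ENNReal.div_le_of_le_mul ?_
  rw [← ENNReal.ofReal_coe_nnreal, ← ENNReal.ofReal_mul a.coe_nonneg, dist_comm]
  exact ENNReal.ofReal_le_ofReal (by simpa [hg0] using hg_le)

end StrictSlopes

theorem strict_gslopes_eq_of_convex_general {X Y : Type*}
    [NormedAddCommGroup X] [NormedSpace ℝ X] [NormedAddCommGroup Y] [NormedSpace ℝ Y]
    {F : X → Set Y} {xbar : X} {ybar : Y} {g : Y → ℝ}
    (hgraph : ybar ∈ F xbar)
    (hg0 : g ybar = 0)
    (hgcont : ContinuousAt g ybar)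
    (hgrowth : ∃ c : ℝ, 0 < c ∧ ∀ᶠ y in 𝓝 ybar, 0 < g y → c * dist y ybar ≤ g y)
    (hFconv : Convex ℝ (svGraph F))
    (hgconv : ConvexOn ℝ univ g) :
    uniformStrictGSlope F g xbar ybar = modStrictGSlope F g xbar ybar ∧
    modStrictGSlope F g xbar ybar = strictGSlope F g xbar ybar ∧
    strictGSlope F g xbar ybar = modStrictSubdiffGSlope F g xbar ybar ∧
    modStrictSubdiffGSlope F g xbar ybar = strictSubdiffGSlope F g xbar ybar := by
  have huniform := uniformStrictGSlope_eq_strictGSlope (xbar := xbar) (ybar := ybar) hFconv hgconv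
  have hsubdiff := uniformStrictGSlope_le_strictSubdiffGSlope (xbar := xbar) (ybar := ybar)
    hFconv hgconv
  have hmod_subdiff := strictSubdiffGSlope_le_modStrictSubdiffGSlope (F := F) (g := g)
    (xbar := xbar) (ybar := ybar)
  have hmod := modStrictSubdiffGSlope_le_modStrictGSlope (xbar := xbar) (ybar := ybar)
    hFconv hgconv (continuous_of_convexOn_of_continuousAt hgconv hgcont)
  have hstrict := modStrictGSlope_le_strictGSlope hgraph hg0 hgrowth hFconv hgconv
  rw [huniform] at hsubdiff ⊢
  have hmod_eq := hstrict.antisymm (hsubdiff.trans (hmod_subdiff.trans hmod))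
  exact ⟨hmod_eq.symm, hmod_eq, (hsubdiff.trans hmod_subdiff).antisymm (hmod.trans hstrict),
    ((hmod.trans hstrict).trans hsubdiff).antisymm hmod_subdiff⟩

/-- Proposition 5P6 (iii): if both `F` and `g` are convex, then all five strict g-slopes
of `F` at `(x̄,ȳ)` coincide. -/
theorem strict_gslopes_eq_of_convex {X Y : Type*}
    [NormedAddCommGroup X] [NormedSpace ℝ X] [NormedAddCommGroup Y] [NormedSpace ℝ Y]
    (F : X → Set Y) (xbar : X) (ybar : Y) (g : Y → ℝ)
    (hgraph : ybar ∈ F xbar)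
    (hg0 : g ybar = 0)
    (hgnonneg : ∀ y : Y, 0 ≤ g y)
    (hgcont : ContinuousAt g ybar)
    (hgLip : ∀ y : Y, y ≠ ybar → ∃ (K : NNReal) (ε : ℝ), 0 < ε ∧
      LipschitzOnWith K g (Metric.ball y ε))
    (hP1 : ∀ y : Y, y ≠ ybar → 0 < g y)
    (hP2 : ∃ c : ℝ, 0 < c ∧ ∃ ε : ℝ, 0 < ε ∧ ∀ y : Y,
      0 < g y → g y < ε → c * dist y ybar ≤ g y)
    (hFconv : Convex ℝ (svGraph F))
    (hgconv : ConvexOn ℝ Set.univ g) :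
    uniformStrictGSlope F g xbar ybar = modStrictGSlope F g xbar ybar ∧
    modStrictGSlope F g xbar ybar = strictGSlope F g xbar ybar ∧
    strictGSlope F g xbar ybar = modStrictSubdiffGSlope F g xbar ybar ∧
    modStrictSubdiffGSlope F g xbar ybar = strictSubdiffGSlope F g xbar ybar := by
  obtain ⟨c, hc, ε, hε, hgrowth⟩ := hP2
  have hsmall : ∀ᶠ y in 𝓝 ybar, g y < ε := hgcont.eventually_lt_const (hg0 ▸ hε)
  exact strict_gslopes_eq_of_convex_general hgraph hg0 hgcont
    ⟨c, hc, hsmall.mono fun y hlt hpos => hgrowth y hpos hlt⟩ hFconv hgconv
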